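/- Let H : Ω → S(m) be continuously differentiable, with repeated eigenvalues λ_1(x) ≤ … ≤ λ_m(x) and eigenprojections P_1(x), …, P_m(x). Fix j ∈ {1,…,m} and assume that tr P_j(x) is constant in Ω. Then P_j is directionally differentiable in Ω, and for every x ∈ Ω and every e ∈ ℝⁿ the two-sided directional derivative exists and equals D_e P_j(x) = P_j(x) · D_e H(x) · A_j(x) + A_j(x) · D_e H(x) · P_j(x). -/

import Mathlib

open scoped Classical

/-- Entrywise directional derivative `D_e H(x)` of a matrix-valued map. -/
noncomputable def DH {E : Type*} [NormedAddCommGroup E] [NormedSpace ℝ E] {m : ℕ}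
    (H : E → Matrix (Fin m) (Fin m) ℝ) (x e : E) : Matrix (Fin m) (Fin m) ℝ :=
  Matrix.of fun i k => fderiv ℝ (fun y => H y i k) x e

/-- Second-order directional derivative `D_b D_a H(x)` (first `a`, then `b`). -/
noncomputable def DH2 {E : Type*} [NormedAddCommGroup E] [NormedSpace ℝ E] {m : ℕ}
    (H : E → Matrix (Fin m) (Fin m) ℝ) (x a b : E) : Matrix (Fin m) (Fin m) ℝ :=
  Matrix.of fun i k => fderiv ℝ (fun y => DH H y a i k) x b

/-- The pseudoinverse `A_j(x)` of `λ_j(x)I - H(x)`. -/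
noncomputable def Amat {E : Type*} {m : ℕ} (lam : Fin m → E → ℝ)
    (P : Fin m → E → Matrix (Fin m) (Fin m) ℝ) (j : Fin m) (x : E) :
    Matrix (Fin m) (Fin m) ℝ :=
  ∑ i ∈ Finset.univ.filter (fun i => lam i x ≠ lam j x),
    (((Finset.univ.filter fun k => lam k x = lam i x).card : ℝ) * (lam j x - lam i x))⁻¹ • P i x

/-!
Write `D = P y - P x` for a fixed eigenprojection `P` of `H`, and `A` for the pseudoinverse of
`l x • 1 - H x`. Multiplying the eigenvalue equation for `P y` by `A` on either side expresses `D`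
as `A (H y - H x) P x + P x (H y - H x) A` plus a linear function of `D` whose coefficients tend to
`0` as `y → x`. Hence `D` is asymptotically equivalent to the first-order term and inherits its
derivative, as soon as `l` and `P` are continuous.

Continuity of `l` is Weyl's inequality. Continuity of `P` comes from the constancy of its trace: for
orthogonal projections of equal trace the Frobenius norm satisfies `‖P - Q‖² = 2 Re tr ((1 - Q) P)`,
and `(1 - P x) P y = A (l x • 1 - H x) P y` is small because `H y * P y = l y • P y`.
-/

open Asymptotics ContinuousLinearMap Finset Filter Matrix Topology

theorem sub_eq_first_order_add_remainder {𝕜 𝔸 : Type*} [CommRing 𝕜] [Ring 𝔸] [Algebra 𝕜 𝔸]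
    {T S P Q A : 𝔸} {a b : 𝕜} (hP : IsIdempotentElem P) (hQ : IsIdempotentElem Q)
    (hSP : S * P = b • P) (hPS : P * S = b • P) (hAT : A * (a • 1 - T) = 1 - Q)
    (hTA : (a • 1 - T) * A = 1 - Q) (hAQ : A * Q = 0) (hQA : Q * A = 0) :
    P - Q = (A * (S - T) * Q + Q * (S - T) * A) +
      ((a - b) • (A * (P - Q) + Q * (P - Q) * A) + A * (S - T) * (P - Q) +
        Q * (P - Q) * (S - T) * A - Q * (P - Q) * (P - Q) * Q) := by
  have left : (1 - Q) * P = (a - b) • (A * (P - Q)) + A * (S - T) * P := by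
    rw [← hAT, mul_sub A P, hAQ, mul_assoc A (S - T), sub_mul S, hSP, mul_assoc, sub_mul,
      smul_mul_assoc, one_mul, sub_zero, ← mul_smul_comm, ← mul_add, sub_smul]
    congr 1
    abel
  have right : P * (1 - Q) = (a - b) • ((P - Q) * A) + P * (S - T) * A := by
    rw [← hTA, sub_mul P, hQA, mul_sub P S, hPS, ← mul_assoc, mul_sub, mul_smul_comm, mul_one,
      sub_zero, ← smul_mul_assoc, ← add_mul, sub_smul]
    congr 1
    abel
  have corner : Q * (P - Q) * (P - Q) * Q = Q - Q * P * Q := by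
    calc Q * (P - Q) * (P - Q) * Q
        = Q * (P * P) * Q - Q * P * (Q * Q) - Q * Q * P * Q + Q * Q * (Q * Q) := by noncomm_ring
      _ = Q - Q * P * Q := by rw [hP.eq, hQ.eq, hQ.eq]; abel
  calc P - Q = (1 - Q) * P + Q * (P * (1 - Q)) - (Q - Q * P * Q) := by noncomm_ring
    _ = (a - b) • (A * (P - Q) + Q * (P - Q) * A) + A * (S - T) * P + Q * (P * (S - T) * A) -
          Q * (P - Q) * (P - Q) * Q := by
      rw [left, right, corner, mul_add, mul_smul_comm, smul_add, mul_assoc Q (P - Q) A]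
      abel
    _ = (a - b) • (A * (P - Q) + Q * (P - Q) * A) + A * (S - T) * P +
          (Q * Q * (S - T) * A + Q * (P - Q) * (S - T) * A) - Q * (P - Q) * (P - Q) * Q := by
      noncomm_ring
    _ = _ := by
      rw [hQ.eq]
      noncomm_ring

section Calculus

variable {𝕜 𝔸 F : Type*} [NontriviallyNormedField 𝕜] [NormedAddCommGroup F] [NormedSpace 𝕜 F]

theorem hasFDerivAt_of_isEquivalent {G : Type*} [NormedAddCommGroup G] [NormedSpace 𝕜 G]
    {f g : F → G} {g' : F →L[𝕜] G} {x : F} (hg : HasFDerivAt g g' x) (hgx : g x = 0)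
    (h : f ~[𝓝 x] g) : HasFDerivAt f g' x := by
  have hfx : f x = 0 := h.isBigO.eq_zero_imp.self_of_nhds hgx
  have hgO : g =O[𝓝 x] (· - x) := by simpa [hgx] using hg.isBigO_sub
  have hsub : HasFDerivAt (f - g) (0 : F →L[𝕜] G) x :=
    .of_isLittleO <| by simpa [hfx, hgx, Pi.sub_def] using h.isLittleO.trans_isBigO hgO
  simpa using hsub.add hg

theorem isLittleO_clm_apply_of_tendsto_zero {α G₁ G₂ : Type*} [NormedAddCommGroup G₁]
    [NormedSpace 𝕜 G₁] [NormedAddCommGroup G₂] [NormedSpace 𝕜 G₂] {u : Filter α}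
    {C : α → G₁ →L[𝕜] G₂} (hC : Tendsto C u (𝓝 0)) (f : α → G₁) :
    (fun a ↦ C a (f a)) =o[u] f := by
  have hbound : (fun a ↦ C a (f a)) =O[u] fun a ↦ ‖C a‖ * ‖f a‖ :=
    .of_norm_le fun a ↦ (C a).le_opNorm (f a)
  have hone : (fun a ↦ ‖C a‖) =o[u] fun _ ↦ (1 : ℝ) :=
    (isLittleO_one_iff ℝ).2 (by simpa using hC.norm)
  simpa using hbound.trans_isLittleO (hone.mul_isBigO (isBigO_refl (fun a ↦ ‖f a‖) u))

theorem hasFDerivAt_idempotent_of_mul_eq_smul [NormedRing 𝔸] [NormedAlgebra 𝕜 𝔸]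
    {T P : F → 𝔸} {l : F → 𝕜} {T' : F →L[𝕜] 𝔸} {A : 𝔸} {x : F}
    (hT : HasFDerivAt T T' x) (hl : ContinuousAt l x) (hPc : ContinuousAt P x)
    (hP : ∀ᶠ y in 𝓝 x, IsIdempotentElem (P y)) (hTP : ∀ᶠ y in 𝓝 x, T y * P y = l y • P y)
    (hPT : ∀ᶠ y in 𝓝 x, P y * T y = l y • P y) (hAT : A * (l x • 1 - T x) = 1 - P x)
    (hTA : (l x • 1 - T x) * A = 1 - P x) (hAP : A * P x = 0) (hPA : P x * A = 0) :
    HasFDerivAt P ((mulLeftRight 𝕜 𝔸 A (P x) + mulLeftRight 𝕜 𝔸 (P x) A) ∘L T') x := by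
  set L := mulLeftRight 𝕜 𝔸 A (P x) + mulLeftRight 𝕜 𝔸 (P x) A with hL
  let D y := P y - P x
  let C y : 𝔸 →L[𝕜] 𝔸 := (l x - l y) • (mul 𝕜 𝔸 A + mulLeftRight 𝕜 𝔸 (P x) A) +
    mul 𝕜 𝔸 (A * (T y - T x)) + mulLeftRight 𝕜 𝔸 (P x) ((T y - T x) * A) -
    mulLeftRight 𝕜 𝔸 (P x) (D y * P x)
  have hC : Tendsto C (𝓝 x) (𝓝 0) := by
    have hTc := hT.continuousAt
    have : ContinuousAt C x := by fun_prop
    simpa [C, D] using this.tendsto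
  have hD : ∀ᶠ y in 𝓝 x, D y = L (T y - T x) + C y (D y) := by
    filter_upwards [hP, hTP, hPT] with y hPy hTPy hPTy
    simpa [hL, C, D, mul_assoc] using sub_eq_first_order_add_remainder hPy hP.self_of_nhds hTPy
      hPTy hAT hTA hAP hPA
  have hequiv : (fun y ↦ L (T y - T x)) ~[𝓝 x] D :=
    ((isLittleO_clm_apply_of_tendsto_zero hC D).neg_left).congr' (hD.mono fun y hy ↦
      eq_sub_of_add_eq (by rw [neg_add_eq_iff_eq_add, add_comm]; exact hy)) .rfl
  have hfirst : HasFDerivAt (fun y ↦ L (T y - T x)) (L ∘L T') x :=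
    L.hasFDerivAt.comp x (hT.sub_const _)
  exact (hasFDerivAt_sub_const_iff _).1 (hasFDerivAt_of_isEquivalent hfirst (by simp) hequiv.symm)

end Calculus

section Frobenius

open scoped Matrix.Norms.Frobenius

variable {𝕜 n : Type*} [RCLike 𝕜] [Fintype n]

theorem trace_mul_conjTranspose_eq_frobenius_norm_sq {m : Type*} [Fintype m] (A : Matrix m n 𝕜) :
    (A * Aᴴ).trace = ((‖A‖ ^ 2 : ℝ) : 𝕜) := by
  have hnonneg : 0 ≤ ∑ i, ∑ k, ‖A i k‖ ^ 2 := by positivity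
  simp only [trace, diag_apply, mul_apply, conjTranspose_apply, ← starRingEnd_apply,
    RCLike.mul_conj, frobenius_norm_def, Real.rpow_two, ← Real.sqrt_eq_rpow, Real.sq_sqrt hnonneg]
  push_cast
  rfl

theorem re_trace_mul_le_frobenius_norm {m : Type*} [Fintype m] (A : Matrix m n 𝕜)
    (B : Matrix n m 𝕜) : RCLike.re (A * B).trace ≤ ‖A‖ * ‖B‖ := by
  calc RCLike.re (A * B).trace = ∑ p : m × n, RCLike.re (A p.1 p.2 * B p.2 p.1) := by
        simp only [trace, diag_apply, mul_apply, map_sum, Fintype.sum_prod_type]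
    _ ≤ ∑ p : m × n, ‖A p.1 p.2‖ * ‖Bᵀ p.1 p.2‖ :=
        sum_le_sum fun p _ ↦ (RCLike.re_le_norm _).trans (norm_mul_le _ _)
    _ ≤ √(∑ p : m × n, ‖A p.1 p.2‖ ^ 2) * √(∑ p : m × n, ‖Bᵀ p.1 p.2‖ ^ 2) :=
        Real.sum_mul_le_sqrt_mul_sqrt _ _ _
    _ = ‖A‖ * ‖B‖ := by
        simp only [← frobenius_norm_transpose B, frobenius_norm_def, Fintype.sum_prod_type,
          Real.rpow_two, Real.sqrt_eq_rpow]

variable {P Q : Matrix n n 𝕜}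

theorem trace_mul_eq_frobenius_norm_sq (hP : IsStarProjection P) (hQ : IsStarProjection Q) :
    (P * Q).trace = ((‖P * Q‖ ^ 2 : ℝ) : 𝕜) := by
  rw [← trace_mul_conjTranspose_eq_frobenius_norm_sq, ← star_eq_conjTranspose, star_mul,
    hP.isSelfAdjoint.star_eq, hQ.isSelfAdjoint.star_eq, trace_mul_comm (P * Q), ← mul_assoc,
    mul_assoc Q P P, hP.isIdempotentElem.eq, trace_mul_comm (Q * P), ← mul_assoc,
    hQ.isIdempotentElem.eq, trace_mul_comm]

theorem frobenius_norm_sq_eq_re_trace (hP : IsStarProjection P) :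
    ‖P‖ ^ 2 = RCLike.re P.trace := by
  have h := trace_mul_eq_frobenius_norm_sq hP hP
  rw [hP.isIdempotentElem.eq] at h
  rw [h, RCLike.ofReal_re]

theorem frobenius_norm_sub_sq_eq [DecidableEq n] (hP : IsStarProjection P)
    (hQ : IsStarProjection Q) (htr : P.trace = Q.trace) :
    ‖P - Q‖ ^ 2 = 2 * RCLike.re ((1 - Q) * P).trace := by
  have hsa : (P - Q)ᴴ = P - Q := (hP.isSelfAdjoint.sub hQ.isSelfAdjoint).star_eq
  have hsq : ((P - Q) * (P - Q)).trace = 2 * ((1 - Q) * P).trace := by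
    simp only [sub_mul, mul_sub, hP.isIdempotentElem.eq, hQ.isIdempotentElem.eq, one_mul,
      trace_sub, trace_mul_comm P Q, htr]
    ring
  have h := congr_arg RCLike.re (trace_mul_conjTranspose_eq_frobenius_norm_sq (P - Q))
  rw [hsa, hsq, RCLike.ofReal_re] at h
  rw [← h, ← RCLike.re_ofReal_mul, RCLike.ofReal_ofNat]

theorem eq_of_isStarProjection_of_mul_eq_of_trace_eq (hP : IsStarProjection P)
    (hQ : IsStarProjection Q) (hmul : P * Q = P) (htr : P.trace = Q.trace) : P = Q := by
  have hsq := frobenius_norm_sub_sq_eq hP hQ htr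
  rw [trace_mul_comm, mul_sub, mul_one, hmul, sub_self, trace_zero, map_zero, mul_zero] at hsq
  exact sub_eq_zero.1 (norm_eq_zero.1 (pow_eq_zero_iff two_ne_zero |>.1 hsq))

theorem continuousAt_eigenprojection [DecidableEq n] {X : Type*} [TopologicalSpace X]
    {T P : X → Matrix n n 𝕜} {l : X → ℝ} {A : Matrix n n 𝕜} {x : X} (hT : ContinuousAt T x)
    (hl : ContinuousAt l x) (hP : ∀ᶠ y in 𝓝 x, IsStarProjection (P y))
    (htr : ∀ᶠ y in 𝓝 x, (P y).trace = (P x).trace)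
    (hTP : ∀ᶠ y in 𝓝 x, T y * P y = l y • P y) (hA : A * (l x • 1 - T x) = 1 - P x) :
    ContinuousAt P x := by
  let N y := A * ((l x - l y) • 1 + (T y - T x))
  have hN : Tendsto (fun y ↦ 2 * (‖N y‖ * ‖P x‖)) (𝓝 x) (𝓝 0) := by
    have : ContinuousAt (fun y ↦ 2 * (‖N y‖ * ‖P x‖)) x := by fun_prop
    simpa [N] using this.tendsto
  have hbound : ∀ᶠ y in 𝓝 x, ‖P y - P x‖ ^ 2 ≤ 2 * (‖N y‖ * ‖P x‖) := by
    filter_upwards [hP, htr, hTP] with y hPy htry hTPy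
    have hcorner : (1 - P x) * P y = N y * P y := by
      simp only [← hA, N, mul_assoc, sub_mul, add_mul, smul_mul_assoc, one_mul, hTPy, sub_smul]
      congr 1
      abel
    have hnorm : ‖P y‖ = ‖P x‖ := by
      rw [← sq_eq_sq₀ (norm_nonneg _) (norm_nonneg _), frobenius_norm_sq_eq_re_trace hPy,
        frobenius_norm_sq_eq_re_trace hP.self_of_nhds, htry]
    rw [frobenius_norm_sub_sq_eq hPy hP.self_of_nhds htry, hcorner, ← hnorm]
    gcongr
    exact re_trace_mul_le_frobenius_norm _ _
  have hsq : Tendsto (fun y ↦ ‖P y - P x‖ ^ 2) (𝓝 x) (𝓝 0) :=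
    squeeze_zero' (.of_forall fun _ ↦ sq_nonneg _) hbound hN
  refine tendsto_iff_norm_sub_tendsto_zero.2 ?_
  simpa using hsq.sqrt

end Frobenius

/-- `P i` is the orthogonal projection onto the eigenspace of the Hermitian matrix `H` for its
eigenvalue `l i`, where the list `l` enumerates the eigenvalues repeated according to multiplicity.
Repeated eigenvalues share their projection, hence the weights in the resolution of the identity. -/
structure IsEigenprojectionFamily {𝕜 n ι : Type*} [RCLike 𝕜] [Fintype n] [DecidableEq n]
    [Fintype ι] (H : Matrix n n 𝕜) (l : ι → ℝ) (P : ι → Matrix n n 𝕜) : Prop where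
  isStarProjection (i : ι) : IsStarProjection (P i)
  mul_eigenprojection (i : ι) : H * P i = l i • P i
  trace_eq (i : ι) : (P i).trace = (#{k | l k = l i} : 𝕜)
  sum_smul_eq_one : ∑ i, (#{k | l k = l i} : ℝ)⁻¹ • P i = 1

/-- The orthogonal projection onto the span of the eigenspaces with eigenvalue in `s`, in terms of
an eigenprojection family `P` with eigenvalues `l`. -/
noncomputable def spectralProjection {𝕜 n ι : Type*} [RCLike 𝕜] [Fintype ι] (l : ι → ℝ)
    (P : ι → Matrix n n 𝕜) (s : Set ℝ) : Matrix n n 𝕜 :=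
  ∑ i with l i ∈ s, (#{k | l k = l i} : ℝ)⁻¹ • P i

/-- The Moore–Penrose pseudoinverse of `l j • 1 - H`, in terms of an eigenprojection family `P` of
`H` with eigenvalues `l`. -/
noncomputable def eigenPseudoinverse {𝕜 n ι : Type*} [RCLike 𝕜] [Fintype ι] (l : ι → ℝ)
    (P : ι → Matrix n n 𝕜) (j : ι) : Matrix n n 𝕜 :=
  ∑ i with l i ≠ l j, ((#{k | l k = l i} : ℝ) * (l j - l i))⁻¹ • P i

namespace IsEigenprojectionFamily

variable {𝕜 n ι : Type*} [RCLike 𝕜] [Fintype n] [DecidableEq n] [Fintype ι] {H : Matrix n n 𝕜}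
  {l : ι → ℝ} {P : ι → Matrix n n 𝕜}

theorem eq_sum_smul (h : IsEigenprojectionFamily H l P) :
    H = ∑ i, ((#{k | l k = l i} : ℝ)⁻¹ * l i) • P i := by
  conv_lhs => rw [← mul_one H, ← h.sum_smul_eq_one, mul_sum]
  simp only [mul_smul_comm, h.mul_eigenprojection, smul_smul]

theorem isSelfAdjoint (h : IsEigenprojectionFamily H l P) : IsSelfAdjoint H := by
  rw [h.eq_sum_smul]
  exact isSelfAdjoint_sum _ fun i _ ↦
    (IsSelfAdjoint.all _).smul (h.isStarProjection i).isSelfAdjoint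

theorem eigenprojection_mul (h : IsEigenprojectionFamily H l P) (i : ι) :
    P i * H = l i • P i := by
  have := congr_arg star (h.mul_eigenprojection i)
  rwa [star_mul, star_smul, star_trivial (l i), h.isSelfAdjoint.star_eq,
    (h.isStarProjection i).isSelfAdjoint.star_eq] at this

theorem mul_eq_zero_of_ne (h : IsEigenprojectionFamily H l P) {i k : ι} (hik : l i ≠ l k) :
    P i * P k = 0 := by
  have : (l i - l k) • (P i * P k) = 0 := by
    rw [sub_smul, ← smul_mul_assoc, ← h.eigenprojection_mul, ← mul_smul_comm,
      ← h.mul_eigenprojection, mul_assoc, sub_self]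
  exact (smul_eq_zero.1 this).resolve_left (sub_ne_zero.2 hik)

theorem spectralProjection_univ (h : IsEigenprojectionFamily H l P) :
    spectralProjection l P Set.univ = 1 := by
  simpa [spectralProjection] using h.sum_smul_eq_one

theorem trace_spectralProjection (h : IsEigenprojectionFamily H l P) (s : Set ℝ) :
    (spectralProjection l P s).trace = (#{i | l i ∈ s} : 𝕜) := by
  have hone (i : ι) : ((#{k | l k = l i} : ℝ)⁻¹ • P i).trace = 1 := by
    have hne : (#{k | l k = l i} : 𝕜) ≠ 0 :=
      Nat.cast_ne_zero.2 (card_ne_zero_of_mem (mem_filter.2 ⟨mem_univ i, rfl⟩))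
    rw [trace_smul, h.trace_eq, RCLike.real_smul_eq_coe_mul]
    push_cast
    exact inv_mul_cancel₀ hne
  simp only [spectralProjection, trace_sum, hone, sum_const, nsmul_eq_mul, mul_one]

theorem card_eq (h : IsEigenprojectionFamily H l P) : Fintype.card n = Fintype.card ι := by
  have := h.trace_spectralProjection Set.univ
  rw [h.spectralProjection_univ, trace_one] at this
  simpa using this

theorem mul_spectralProjection_of_mem (h : IsEigenprojectionFamily H l P) {s : Set ℝ} {i : ι}
    (hi : l i ∈ s) : P i * spectralProjection l P s = P i := by
  have hcompl : P i * ∑ k with ¬ l k ∈ s, (#{m | l m = l k} : ℝ)⁻¹ • P k = 0 := by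
    rw [mul_sum]
    refine sum_eq_zero fun k hk ↦ ?_
    rw [mul_smul_comm, h.mul_eq_zero_of_ne (ne_of_mem_of_not_mem hi (mem_filter.1 hk).2), smul_zero]
  rw [← add_zero (P i * _), ← hcompl, ← mul_add, spectralProjection,
    sum_filter_add_sum_filter_not, h.sum_smul_eq_one, mul_one]

theorem isStarProjection_spectralProjection (h : IsEigenprojectionFamily H l P) (s : Set ℝ) :
    IsStarProjection (spectralProjection l P s) where
  isIdempotentElem := (sum_mul _ _ _).trans <| sum_congr rfl fun i hi ↦ by
    rw [smul_mul_assoc, h.mul_spectralProjection_of_mem (mem_filter.1 hi).2]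
  isSelfAdjoint := isSelfAdjoint_sum _ fun i _ ↦
    (IsSelfAdjoint.all _).smul (h.isStarProjection i).isSelfAdjoint

theorem spectralProjection_singleton (h : IsEigenprojectionFamily H l P) (j : ι) :
    spectralProjection l P {l j} = P j := by
  refine (eq_of_isStarProjection_of_mul_eq_of_trace_eq (h.isStarProjection j)
    (h.isStarProjection_spectralProjection {l j}) (h.mul_spectralProjection_of_mem rfl) ?_).symm
  rw [h.trace_eq, h.trace_spectralProjection]
  rfl

theorem sum_ne_smul_eq_one_sub (h : IsEigenprojectionFamily H l P) (j : ι) :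
    ∑ i with l i ≠ l j, (#{k | l k = l i} : ℝ)⁻¹ • P i = 1 - P j := by
  rw [eq_sub_iff_add_eq', ← h.sum_smul_eq_one, ← sum_filter_add_sum_filter_not univ (l · = l j)]
  exact congr_arg (· + _) (h.spectralProjection_singleton j).symm

theorem eigenPseudoinverse_mul (h : IsEigenprojectionFamily H l P) (j : ι) :
    eigenPseudoinverse l P j * P j = 0 := by
  rw [eigenPseudoinverse, sum_mul]
  refine sum_eq_zero fun i hi ↦ ?_
  rw [smul_mul_assoc, h.mul_eq_zero_of_ne (mem_filter.1 hi).2, smul_zero]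

theorem mul_eigenPseudoinverse (h : IsEigenprojectionFamily H l P) (j : ι) :
    P j * eigenPseudoinverse l P j = 0 := by
  rw [eigenPseudoinverse, mul_sum]
  refine sum_eq_zero fun i hi ↦ ?_
  rw [mul_smul_comm, h.mul_eq_zero_of_ne (mem_filter.1 hi).2.symm, smul_zero]

theorem eigenPseudoinverse_mul_sub (h : IsEigenprojectionFamily H l P) (j : ι) :
    eigenPseudoinverse l P j * (l j • 1 - H) = 1 - P j := by
  rw [eigenPseudoinverse, sum_mul, ← h.sum_ne_smul_eq_one_sub]
  refine sum_congr rfl fun i hi ↦ ?_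
  rw [smul_mul_assoc, mul_sub (P i), h.eigenprojection_mul, mul_smul_comm, mul_one, ← sub_smul,
    smul_smul, mul_inv, inv_mul_cancel_right₀ (sub_ne_zero.2 (mem_filter.1 hi).2.symm)]

theorem sub_mul_eigenPseudoinverse (h : IsEigenprojectionFamily H l P) (j : ι) :
    (l j • 1 - H) * eigenPseudoinverse l P j = 1 - P j := by
  rw [eigenPseudoinverse, mul_sum, ← h.sum_ne_smul_eq_one_sub]
  refine sum_congr rfl fun i hi ↦ ?_
  rw [mul_smul_comm, sub_mul _ H, h.mul_eigenprojection, smul_mul_assoc, one_mul, ← sub_smul,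
    smul_smul, mul_inv, inv_mul_cancel_right₀ (sub_ne_zero.2 (mem_filter.1 hi).2.symm)]

theorem commute_spectralProjection (h : IsEigenprojectionFamily H l P) (s : Set ℝ) :
    Commute H (spectralProjection l P s) :=
  .sum_right _ _ _ fun i _ ↦
    have hcomm : Commute H (P i) := (h.mul_eigenprojection i).trans (h.eigenprojection_mul i).symm
    hcomm.smul_right _

section Weyl

open scoped Matrix.Norms.Frobenius

theorem re_trace_sub_smul_mul_spectralProjection_mul (h : IsEigenprojectionFamily H l P) (a : ℝ)
    (s : Set ℝ) {Q : Matrix n n 𝕜} (hQ : IsStarProjection Q) :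
    RCLike.re ((H - a • 1) * spectralProjection l P s * Q).trace =
      ∑ i with l i ∈ s, (#{k | l k = l i} : ℝ)⁻¹ * ((l i - a) * ‖P i * Q‖ ^ 2) := by
  have hterm (i : ι) : RCLike.re ((H - a • 1) * P i * Q).trace = (l i - a) * ‖P i * Q‖ ^ 2 := by
    rw [sub_mul, h.mul_eigenprojection, smul_mul_assoc, one_mul, ← sub_smul, smul_mul_assoc,
      trace_smul, RCLike.smul_re, trace_mul_eq_frobenius_norm_sq (h.isStarProjection i) hQ,
      RCLike.ofReal_re]
  simp only [spectralProjection, mul_sum, sum_mul, mul_smul_comm, smul_mul_assoc, trace_sum,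
    trace_smul, map_sum, RCLike.smul_re, hterm]

theorem re_trace_sub_smul_mul_spectralProjection_Ici_mul_nonneg
    (h : IsEigenprojectionFamily H l P) (a : ℝ) {Q : Matrix n n 𝕜} (hQ : IsStarProjection Q) :
    0 ≤ RCLike.re ((H - a • 1) * spectralProjection l P (Set.Ici a) * Q).trace := by
  rw [h.re_trace_sub_smul_mul_spectralProjection_mul _ _ hQ]
  refine sum_nonneg fun i hi ↦ ?_
  have : 0 ≤ l i - a := sub_nonneg.2 (mem_filter.1 hi).2
  positivity

theorem re_trace_sub_smul_mul_spectralProjection_Iic_mul_nonpos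
    (h : IsEigenprojectionFamily H l P) (a : ℝ) {Q : Matrix n n 𝕜} (hQ : IsStarProjection Q) :
    RCLike.re ((H - a • 1) * spectralProjection l P (Set.Iic a) * Q).trace ≤ 0 := by
  rw [h.re_trace_sub_smul_mul_spectralProjection_mul _ _ hQ]
  refine sum_nonpos fun i hi ↦ mul_nonpos_of_nonneg_of_nonpos (by positivity) ?_
  have : l i - a ≤ 0 := sub_nonpos.2 (mem_filter.1 hi).2
  exact mul_nonpos_of_nonpos_of_nonneg this (by positivity)

variable {H' : Matrix n n 𝕜} {l' : ι → ℝ} {P' : ι → Matrix n n 𝕜}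

theorem one_le_frobenius_norm_spectralProjection_mul (h : IsEigenprojectionFamily H l P)
    (h' : IsEigenprojectionFamily H' l' P') {s t : Set ℝ}
    (hst : Fintype.card ι < #{i | l i ∈ s} + #{i | l' i ∈ t}) :
    1 ≤ ‖spectralProjection l P s * spectralProjection l' P' t‖ := by
  set R := spectralProjection l P s
  set R' := spectralProjection l' P' t
  have hR : IsStarProjection R := h.isStarProjection_spectralProjection s
  have hR' : IsStarProjection R' := h'.isStarProjection_spectralProjection t
  have hcompl : ((‖(1 - R) * (1 - R')‖ ^ 2 : ℝ) : 𝕜) =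
      Fintype.card ι - #{i | l i ∈ s} - #{i | l' i ∈ t} + (‖R * R'‖ ^ 2 : ℝ) := by
    rw [← trace_mul_eq_frobenius_norm_sq hR.one_sub hR'.one_sub,
      ← trace_mul_eq_frobenius_norm_sq hR hR', ← h.trace_spectralProjection,
      ← h'.trace_spectralProjection, ← h.card_eq, ← trace_one, ← trace_sub, ← trace_sub,
      ← trace_add]
    congr 1
    noncomm_ring
  have hreal : ‖(1 - R) * (1 - R')‖ ^ 2 =
      Fintype.card ι - #{i | l i ∈ s} - #{i | l' i ∈ t} + ‖R * R'‖ ^ 2 := mod_cast hcompl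
  have hcard : (Fintype.card ι : ℝ) + 1 ≤ #{i | l i ∈ s} + #{i | l' i ∈ t} := mod_cast hst
  rw [← one_le_sq_iff₀ (norm_nonneg _)]
  linarith [sq_nonneg ‖(1 - R) * (1 - R')‖]

theorem sub_mul_frobenius_norm_sq_le (h : IsEigenprojectionFamily H l P)
    (h' : IsEigenprojectionFamily H' l' P') (a b : ℝ) :
    (a - b) * ‖spectralProjection l P (Set.Ici a) * spectralProjection l' P' (Set.Iic b)‖ ^ 2 ≤
      ‖H - H'‖ * ‖spectralProjection l P (Set.Ici a) * spectralProjection l' P' (Set.Iic b)‖ := by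
  set R := spectralProjection l P (Set.Ici a)
  set R' := spectralProjection l' P' (Set.Iic b)
  have hR : IsStarProjection R := h.isStarProjection_spectralProjection _
  have hR' : IsStarProjection R' := h'.isStarProjection_spectralProjection _
  have hre : RCLike.re (R * R').trace = ‖R * R'‖ ^ 2 := by
    rw [trace_mul_eq_frobenius_norm_sq hR hR', RCLike.ofReal_re]
  have hcomm : ((H' - b • 1) * R' * R).trace = ((H' - b • 1) * (R * R')).trace := by
    have : Commute (H' - b • 1) R' :=
      (h'.commute_spectralProjection _).sub_left ((Commute.one_left _).smul_left _)
    rw [this.eq, mul_assoc, trace_mul_comm, mul_assoc]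
  calc (a - b) * ‖R * R'‖ ^ 2
      ≤ (a - b) * ‖R * R'‖ ^ 2 + RCLike.re ((H - a • 1) * R * R').trace -
          RCLike.re ((H' - b • 1) * R' * R).trace := by
        linarith [h.re_trace_sub_smul_mul_spectralProjection_Ici_mul_nonneg a hR',
          h'.re_trace_sub_smul_mul_spectralProjection_Iic_mul_nonpos b hR]
    _ = RCLike.re ((H - H') * (R * R')).trace := by
        rw [hcomm]
        simp only [← hre, mul_assoc, sub_mul, smul_mul_assoc, one_mul, trace_sub, trace_smul,
          map_sub, RCLike.smul_re]
        ring
    _ ≤ ‖H - H'‖ * ‖R * R'‖ := re_trace_mul_le_frobenius_norm _ _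

/-- Weyl's inequality, from a dimension count: the span of the eigenspaces of `H` above `l j` meets
that of the eigenspaces of `H'` below `l' j`. -/
theorem sub_le_frobenius_norm_sub [LinearOrder ι] (h : IsEigenprojectionFamily H l P)
    (h' : IsEigenprojectionFamily H' l' P') (hl : Monotone l) (hl' : Monotone l') (j : ι) :
    l j - l' j ≤ ‖H - H'‖ := by
  set q := ‖spectralProjection l P (Set.Ici (l j)) * spectralProjection l' P' (Set.Iic (l' j))‖
  have hcard : Fintype.card ι < #{i | l i ∈ Set.Ici (l j)} + #{i | l' i ∈ Set.Iic (l' j)} := by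
    rw [← card_union_add_card_inter, ← card_univ]
    refine lt_add_of_le_of_pos (card_le_card fun i _ ↦ ?_) (card_pos.2 ⟨j, by simp⟩)
    rcases le_total i j with hij | hij
    · simp [hl' hij]
    · simp [hl hij]
  have hone : 1 ≤ q := h.one_le_frobenius_norm_spectralProjection_mul h' hcard
  have hlin : (l j - l' j) * q ≤ ‖H - H'‖ := by
    have := h.sub_mul_frobenius_norm_sq_le h' (l j) (l' j)
    rw [sq, ← mul_assoc] at this
    exact le_of_mul_le_mul_right this (zero_lt_one.trans_le hone)
  rcases le_total (l j - l' j) 0 with hneg | hpos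
  · exact hneg.trans (norm_nonneg _)
  · exact (le_mul_of_one_le_right hpos hone).trans hlin

theorem abs_sub_le_frobenius_norm_sub [LinearOrder ι] (h : IsEigenprojectionFamily H l P)
    (h' : IsEigenprojectionFamily H' l' P') (hl : Monotone l) (hl' : Monotone l') (j : ι) :
    |l j - l' j| ≤ ‖H - H'‖ :=
  abs_sub_le_iff.2 ⟨h.sub_le_frobenius_norm_sub h' hl hl' j,
    norm_sub_rev H H' ▸ h'.sub_le_frobenius_norm_sub h hl' hl j⟩

end Weyl

end IsEigenprojectionFamily

section Derivative

open scoped Matrix.Norms.Frobenius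

variable {𝕜 n ι E : Type*} [RCLike 𝕜] [Fintype n] [DecidableEq n] [Fintype ι] [LinearOrder ι]
  {l : ι → E → ℝ} {P : ι → E → Matrix n n 𝕜}

theorem continuousAt_eigenvalue [TopologicalSpace E] {H : E → Matrix n n 𝕜} {x : E}
    (hH : ContinuousAt H x)
    (hfam : ∀ᶠ y in 𝓝 x, IsEigenprojectionFamily (H y) (l · y) (P · y))
    (hmono : ∀ᶠ y in 𝓝 x, Monotone (l · y)) (j : ι) : ContinuousAt (l j) x := by
  have hbound : ∀ᶠ y in 𝓝 x, ‖l j y - l j x‖ ≤ ‖H y - H x‖ := by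
    filter_upwards [hfam, hmono] with y hfamy hmonoy
    exact hfamy.abs_sub_le_frobenius_norm_sub hfam.self_of_nhds hmonoy hmono.self_of_nhds j
  exact tendsto_iff_norm_sub_tendsto_zero.2 <| squeeze_zero' (.of_forall fun _ ↦ norm_nonneg _)
    hbound (tendsto_iff_norm_sub_tendsto_zero.1 hH)

theorem directional_derivative_of_eigenprojections_general [NormedAddCommGroup E]
    [NormedSpace ℝ E] {H : E → Matrix n n 𝕜} {H' : E →L[ℝ] Matrix n n 𝕜} {x : E} (j : ι)
    (hH : HasFDerivAt H H' x)
    (hfam : ∀ᶠ y in 𝓝 x, IsEigenprojectionFamily (H y) (l · y) (P · y))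
    (hmono : ∀ᶠ y in 𝓝 x, Monotone (l · y))
    (hd : ∀ᶠ y in 𝓝 x, (P j y).trace = (P j x).trace) :
    HasFDerivAt (P j)
      ((mulLeftRight ℝ _ (eigenPseudoinverse (l · x) (P · x) j) (P j x) +
        mulLeftRight ℝ _ (P j x) (eigenPseudoinverse (l · x) (P · x) j)) ∘L H') x := by
  have hx := hfam.self_of_nhds
  have hproj : ∀ᶠ y in 𝓝 x, IsStarProjection (P j y) := hfam.mono fun _ h ↦ h.isStarProjection j
  have hHP : ∀ᶠ y in 𝓝 x, H y * P j y = l j y • P j y := hfam.mono fun _ h ↦ h.mul_eigenprojection j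
  have hPH : ∀ᶠ y in 𝓝 x, P j y * H y = l j y • P j y := hfam.mono fun _ h ↦ h.eigenprojection_mul j
  have hl : ContinuousAt (l j) x := continuousAt_eigenvalue hH.continuousAt hfam hmono j
  have hP : ContinuousAt (P j) x :=
    continuousAt_eigenprojection hH.continuousAt hl hproj hd hHP (hx.eigenPseudoinverse_mul_sub j)
  exact hasFDerivAt_idempotent_of_mul_eq_smul hH hl hP (hproj.mono fun _ h ↦ h.isIdempotentElem)
    hHP hPH (hx.eigenPseudoinverse_mul_sub j) (hx.sub_mul_eigenPseudoinverse j)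
    (hx.eigenPseudoinverse_mul j) (hx.mul_eigenPseudoinverse j)

end Derivative

section Entrywise

variable {𝕜 E α m n : Type*} [NontriviallyNormedField 𝕜] [NormedAddCommGroup E] [NormedSpace 𝕜 E]
  [NormedAddCommGroup α] [NormedSpace 𝕜 α] [Finite n]

theorem differentiableAt_matrix {F : E → Matrix m n α} {x : E} :
    DifferentiableAt 𝕜 F x ↔ ∀ i k, DifferentiableAt 𝕜 (F · i k) x := by
  cases nonempty_fintype n
  exact differentiableAt_pi.trans (forall_congr' fun _ ↦ differentiableAt_pi)

theorem hasLineDerivAt_matrix_apply {F : E → Matrix m n α} {F' : E →L[𝕜] Matrix m n α} {x : E}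
    (hF : HasFDerivAt F F' x) (e : E) (i : m) (k : n) :
    HasLineDerivAt 𝕜 (F · i k) (F' e i k) x e := by
  cases nonempty_fintype n
  exact (hasFDerivAt_pi'.1 (hasFDerivAt_pi'.1 hF i) k).hasLineDerivAt e

theorem fderiv_matrix_apply {F : E → Matrix m n α} {x : E} (hF : DifferentiableAt 𝕜 F x) (e : E)
    (i : m) (k : n) : fderiv 𝕜 F x e i k = fderiv 𝕜 (F · i k) x e := by
  cases nonempty_fintype n
  rw [(hasFDerivAt_pi'.1 (hasFDerivAt_pi'.1 hF.hasFDerivAt i) k).fderiv]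
  rfl

end Entrywise

theorem DH_eq_fderiv {E : Type*} [NormedAddCommGroup E] [NormedSpace ℝ E] {m : ℕ}
    {H : E → Matrix (Fin m) (Fin m) ℝ} {x : E} (hH : DifferentiableAt ℝ H x) (e : E) :
    DH H x e = fderiv ℝ H x e :=
  Matrix.ext fun i k ↦ (fderiv_matrix_apply hH e i k).symm

theorem directional_derivative_of_eigenprojections {n m : ℕ}
    (Ω : Set (EuclideanSpace ℝ (Fin n))) (hΩo : IsOpen Ω) (hΩc : IsConnected Ω)
    (H : EuclideanSpace ℝ (Fin n) → Matrix (Fin m) (Fin m) ℝ)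
    (lam : Fin m → EuclideanSpace ℝ (Fin n) → ℝ)
    (P : Fin m → EuclideanSpace ℝ (Fin n) → Matrix (Fin m) (Fin m) ℝ)
    (hsymm : ∀ x ∈ Ω, (H x).IsSymm)
    (hmono : ∀ x ∈ Ω, Monotone fun i => lam i x)
    (hPsymm : ∀ (j : Fin m) (x), x ∈ Ω → (P j x).IsSymm)
    (hPidem : ∀ (j : Fin m) (x), x ∈ Ω → P j x * P j x = P j x)
    (hHP : ∀ (j : Fin m) (x), x ∈ Ω → H x * P j x = lam j x • P j x)
    (htr : ∀ (j : Fin m) (x), x ∈ Ω →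
      (P j x).trace = ((Finset.univ.filter fun i => lam i x = lam j x).card : ℝ))
    (hPeq : ∀ (i j : Fin m) (x), x ∈ Ω → lam i x = lam j x → P i x = P j x)
    (hPorth : ∀ (i j : Fin m) (x), x ∈ Ω → lam i x ≠ lam j x → P i x * P j x = 0)
    (hcompl : ∀ x ∈ Ω,
      ∑ i, ((Finset.univ.filter fun k => lam k x = lam i x).card : ℝ)⁻¹ • P i x = 1)
    (hH : ∀ i k, ContDiffOn ℝ 1 (fun y => H y i k) Ω)
    (j : Fin m) (d : ℕ)
    (hd : ∀ x ∈ Ω, (P j x).trace = (d : ℝ)) :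
    ∀ x ∈ Ω, ∀ (e : EuclideanSpace ℝ (Fin n)) (i k : Fin m),
      HasDerivAt (fun h : ℝ => P j (x + h • e) i k)
        ((P j x * DH H x e * Amat lam P j x + Amat lam P j x * DH H x e * P j x) i k) 0 := by
  intro x hx e i k
  have hΩx : ∀ᶠ y in 𝓝 x, y ∈ Ω := hΩo.mem_nhds hx
  have hdiff : DifferentiableAt ℝ H x := differentiableAt_matrix.2 fun i k ↦
    ((hH i k).contDiffAt (hΩo.mem_nhds hx)).differentiableAt one_ne_zero
  have hfam : ∀ᶠ y in 𝓝 x, IsEigenprojectionFamily (H y) (lam · y) (P · y) :=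
    hΩx.mono fun y hy ↦
      { isStarProjection := fun i ↦ ⟨hPidem i y hy, hPsymm i y hy⟩
        mul_eigenprojection := fun i ↦ hHP i y hy
        trace_eq := fun i ↦ htr i y hy
        sum_smul_eq_one := hcompl y hy }
  have hderiv := directional_derivative_of_eigenprojections_general j hdiff.hasFDerivAt hfam
    (hΩx.mono hmono) (hΩx.mono fun y hy ↦ (hd y hy).trans (hd x hx).symm)
  rw [DH_eq_fderiv hdiff, add_comm]
  exact hasLineDerivAt_matrix_apply hderiv e i k
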